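/- Let Λ ⊆ {1,…,d} be any index set of size k, and let x̃ be a minimizer of ‖Ax − y‖₂ over all vectors x ∈ ℝ^d whose support is contained in Λ. If x̃ has exactly k nonzero entries, then x̃ is a local minimum of the objective F2_λ(x) = (1/2)‖Ax − y‖₂² + λ τ_k(x) for every λ ≥ λ̄ = ‖y‖₂ · max_{1≤i≤d} ‖a_i‖₂, and likewise x̃ is a local minimum of F1_λ(x) = ‖Ax − y‖₂ + λ τ_k(x) for every λ ≥ β = max_{1≤i≤d} ‖a_i‖₂. -/

import Mathlib

open Finset Filter Topology

/-- Euclidean (ℓ₂) norm of a vector in ℝ^m. -/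
noncomputable def l2norm {m : ℕ} (v : Fin m → ℝ) : ℝ := Real.sqrt (∑ i, v i ^ 2)

/-- The trimmed lasso penalty: the minimum, over index sets Λ of size d − k,
of the ℓ₁ norm of x restricted to Λ. -/
noncomputable def tauTL {d : ℕ} (k : ℕ) (x : Fin d → ℝ) : ℝ :=
  sInf ((fun Λ : Finset (Fin d) => ∑ i ∈ Λ, |x i|) '' {Λ : Finset (Fin d) | Λ.card = d - k})

/-!
Near `xt` the entries indexed by `Λ` stay larger than the others, so there the trimmed lasso
penalty is the `ℓ₁` norm off `Λ`, and it vanishes at `xt`. Erasing the entries of `x` off `Λ` gives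
a competitor for the restricted minimization and moves the residual by at most `β` times that same
`ℓ₁` norm, where `β` is the largest column norm. Hence `xt` is a local minimizer of
`‖L x - y‖ + λ τ_k(x)` for `λ = β`, and then for every larger `λ`. For the squared objective the
tangent line bound `s² / 2 ≥ r² / 2 + r (s - r)` multiplies the required weight by the residual
`r` at `xt`, which is at most `‖y‖`. Nothing here is special to the Euclidean norm: the residual may
be measured in any seminorm.
-/

lemma l2norm_eq_norm_toLp {m : ℕ} (v : Fin m → ℝ) : l2norm v = ‖WithLp.toLp 2 v‖ := by
  simp only [l2norm, EuclideanSpace.norm_eq, Real.norm_eq_abs, sq_abs]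

section TrimmedLasso

lemma sum_le_sum_of_card_eq_of_sdiff_le {ι M : Type*} [DecidableEq ι] [AddCommMonoid M]
    [PartialOrder M] [IsOrderedCancelAddMonoid M] {s t : Finset ι} {f : ι → M}
    (hcard : #s = #t) (hle : ∀ i ∈ s \ t, ∀ j ∈ t \ s, f i ≤ f j) :
    ∑ i ∈ s, f i ≤ ∑ i ∈ t, f i := by
  let e : ↥(s \ t) ≃ ↥(t \ s) := Finset.equivOfCardEq (card_sdiff_comm hcard)
  rw [← sum_sdiff_le_sum_sdiff, ← sum_coe_sort (s \ t), ← sum_coe_sort (t \ s)]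
  calc ∑ i : ↥(s \ t), f i
      ≤ ∑ i : ↥(s \ t), f (e i) := sum_le_sum fun i _ => hle i i.2 (e i) (e i).2
    _ = ∑ j : ↥(t \ s), f j := e.sum_comp fun j => f j

lemma eventually_norm_lt_norm_of_norm_lt_norm {ι E : Type*} [Finite ι] [SeminormedAddCommGroup E]
    (x : ι → E) : ∀ᶠ z in 𝓝 x, ∀ i j, ‖x i‖ < ‖x j‖ → ‖z i‖ < ‖z j‖ := by
  have hcont (i : ι) : ContinuousAt (fun z : ι → E => ‖z i‖) x :=
    (continuous_apply i).norm.continuousAt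
  simp only [eventually_all]
  exact fun i j hij => (hcont i).eventually_lt (hcont j) hij

variable {d : ℕ} {Λ : Finset (Fin d)} {x : Fin d → ℝ}

lemma tauTL_nonneg (k : ℕ) (x : Fin d → ℝ) : 0 ≤ tauTL k x :=
  Real.sInf_nonneg <| Set.forall_mem_image.2 fun _ _ => sum_nonneg fun _ _ => abs_nonneg _

lemma tauTL_card_eq_sum_compl (hdom : ∀ i ∉ Λ, ∀ j ∈ Λ, |x i| ≤ |x j|) :
    tauTL #Λ x = ∑ i ∈ Λᶜ, |x i| := by
  have hcompl : #Λᶜ = d - #Λ := by rw [card_compl, Fintype.card_fin]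
  refine IsLeast.csInf_eq ⟨Set.mem_image_of_mem _ hcompl, Set.forall_mem_image.2 fun S hS => ?_⟩
  refine sum_le_sum_of_card_eq_of_sdiff_le (hcompl.trans hS.symm) fun i hi j hj => hdom i ?_ j ?_
  · exact mem_compl.1 (mem_sdiff.1 hi).1
  · exact notMem_compl.1 (mem_sdiff.1 hj).2

lemma eventually_tauTL_eq_sum_compl (hx : Function.support x = Λ) :
    ∀ᶠ z in 𝓝 x, tauTL #Λ z = ∑ i ∈ Λᶜ, |z i| := by
  have hmem (i : Fin d) : i ∈ Λ ↔ x i ≠ 0 := by rw [← mem_coe, ← hx, Function.mem_support]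
  filter_upwards [eventually_norm_lt_norm_of_norm_lt_norm x] with z hz
  refine tauTL_card_eq_sum_compl fun i hi j hj => (hz i j ?_).le
  rw [not_not.1 (mt (hmem i).2 hi), norm_zero]
  exact norm_pos_iff.2 ((hmem j).1 hj)

lemma tauTL_card_eq_zero (hx : Function.support x = Λ) : tauTL #Λ x = 0 := by
  rw [(eventually_tauTL_eq_sum_compl hx).self_of_nhds]
  refine sum_eq_zero fun i hi => abs_eq_zero.2 (Function.notMem_support.1 ?_)
  rwa [hx, mem_coe, ← mem_compl]

end TrimmedLasso

section Residual

variable {𝕜 ι E : Type*} [NormedField 𝕜] [Fintype ι] [DecidableEq ι]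
  [SeminormedAddCommGroup E] [NormedSpace 𝕜 E]

lemma norm_map_le_iSup_mul_sum_norm (L : (ι → 𝕜) →ₗ[𝕜] E) (w : ι → 𝕜) :
    ‖L w‖ ≤ (⨆ i, ‖L (Pi.single i 1)‖) * ∑ i, ‖w i‖ := by
  have hcol (i : ι) : ‖L (Pi.single i 1)‖ ≤ ⨆ j, ‖L (Pi.single j 1)‖ :=
    le_ciSup (f := fun j => ‖L (Pi.single j 1)‖) (Set.finite_range _).bddAbove i
  calc ‖L w‖ = ‖∑ i, w i • L (Pi.single i 1)‖ := by
        simp only [← map_smul, ← map_sum, ← Pi.single_smul, smul_eq_mul, mul_one, univ_sum_single]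
    _ ≤ ∑ i, ‖w i‖ * ‖L (Pi.single i 1)‖ :=
        norm_sum_le_of_le _ fun i _ => norm_smul_le _ _
    _ ≤ ∑ i, ‖w i‖ * ⨆ j, ‖L (Pi.single j 1)‖ := by gcongr with i; exact hcol i
    _ = (⨆ i, ‖L (Pi.single i 1)‖) * ∑ i, ‖w i‖ := by rw [← sum_mul, mul_comm]

lemma norm_residual_le_add_mul_sum_compl {L : (ι → 𝕜) →ₗ[𝕜] E} {y : E} {Λ : Finset ι} {r : ℝ}
    (hr : ∀ x : ι → 𝕜, (∀ i ∉ Λ, x i = 0) → r ≤ ‖L x - y‖) (x : ι → 𝕜) :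
    r ≤ ‖L x - y‖ + (⨆ i, ‖L (Pi.single i 1)‖) * ∑ i ∈ Λᶜ, ‖x i‖ := by
  let w : ι → 𝕜 := Λᶜ.piecewise x 0
  have hw : ∑ i, ‖w i‖ = ∑ i ∈ Λᶜ, ‖x i‖ := by
    simp only [w, piecewise, apply_ite norm, Pi.zero_apply, norm_zero, sum_ite_mem, univ_inter]
  calc r ≤ ‖L (x - w) - y‖ := hr _ fun i hi => by simp [w, hi]
    _ = ‖L x - y - L w‖ := by rw [map_sub, sub_right_comm]
    _ ≤ ‖L x - y‖ + ‖L w‖ := norm_sub_le _ _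
    _ ≤ ‖L x - y‖ + (⨆ i, ‖L (Pi.single i 1)‖) * ∑ i ∈ Λᶜ, ‖x i‖ := by
        rw [← hw]; gcongr; exact norm_map_le_iSup_mul_sum_norm L w

end Residual

section PenaltyWeight

variable {X : Type*} [TopologicalSpace X] {r p : X → ℝ} {a : X} {β lam : ℝ}

lemma isLocalMin_add_mul_of_le (hp : ∀ x, 0 ≤ p x) (hpa : p a = 0)
    (hmin : IsLocalMin (fun x => r x + β * p x) a) (hlam : β ≤ lam) :
    IsLocalMin (fun x => r x + lam * p x) a := by
  filter_upwards [hmin] with x hx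
  calc r a + lam * p a = r a + β * p a := by rw [hpa, mul_zero, mul_zero]
    _ ≤ r x + β * p x := hx
    _ ≤ r x + lam * p x := by gcongr; exact hp x

lemma isLocalMin_half_sq_add_mul (hp : ∀ x, 0 ≤ p x) (hpa : p a = 0) (hra : 0 ≤ r a)
    (hmin : IsLocalMin (fun x => r x + β * p x) a) (hlam : r a * β ≤ lam) :
    IsLocalMin (fun x => (1 / 2) * r x ^ 2 + lam * p x) a := by
  refine isLocalMin_add_mul_of_le hp hpa ?_ hlam
  filter_upwards [hmin] with x hx
  rw [hpa, mul_zero, add_zero] at hx ⊢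
  have htangent : 1 / 2 * r a ^ 2 + r a * (r x - r a) ≤ 1 / 2 * r x ^ 2 := by
    linarith [sq_nonneg (r x - r a)]
  linarith [mul_le_mul_of_nonneg_left hx hra]

end PenaltyWeight

theorem stmt3_general {E : Type*} [SeminormedAddCommGroup E] [NormedSpace ℝ E] {d : ℕ} (k : ℕ)
    (L : (Fin d → ℝ) →ₗ[ℝ] E) (y : E) (Λ : Finset (Fin d)) (hΛ : #Λ = k) (xt : Fin d → ℝ)
    (hsupp : ∀ i ∉ Λ, xt i = 0)
    (hminres : ∀ x : Fin d → ℝ, (∀ i ∉ Λ, x i = 0) → ‖L xt - y‖ ≤ ‖L x - y‖)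
    (hcard : Set.ncard {i | xt i ≠ 0} = k) :
    (∀ lam : ℝ, ‖y‖ * (⨆ i, ‖L (Pi.single i 1)‖) ≤ lam →
      IsLocalMin (fun x => (1 / 2) * ‖L x - y‖ ^ 2 + lam * tauTL k x) xt) ∧
    (∀ lam : ℝ, (⨆ i, ‖L (Pi.single i 1)‖) ≤ lam →
      IsLocalMin (fun x => ‖L x - y‖ + lam * tauTL k x) xt) := by
  subst hΛ
  have hsupport : Function.support xt = Λ :=
    Set.eq_of_subset_of_ncard_le (fun i => not_imp_comm.1 (hsupp i))
      (by rw [Set.ncard_coe_finset]; exact hcard.ge)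
  have htau : tauTL #Λ xt = 0 := tauTL_card_eq_zero hsupport
  have hβ : 0 ≤ ⨆ i, ‖L (Pi.single i 1)‖ := Real.iSup_nonneg fun _ => norm_nonneg _
  have hres : ‖L xt - y‖ ≤ ‖y‖ := by simpa using hminres 0 fun _ _ => rfl
  have hmin : IsLocalMin (fun x => ‖L x - y‖ + (⨆ i, ‖L (Pi.single i 1)‖) * tauTL #Λ x) xt := by
    filter_upwards [eventually_tauTL_eq_sum_compl hsupport] with x hx
    rw [htau, mul_zero, add_zero, hx]
    exact norm_residual_le_add_mul_sum_compl hminres x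
  exact ⟨fun lam hlam => isLocalMin_half_sq_add_mul (tauTL_nonneg _) htau (norm_nonneg _) hmin
      ((mul_le_mul_of_nonneg_right hres hβ).trans hlam),
    fun lam hlam => isLocalMin_add_mul_of_le (tauTL_nonneg _) htau hmin hlam⟩

/-- Let Λ be an index set of size k and x̃ a minimizer of ‖Ax − y‖₂ over
vectors supported in Λ. If x̃ has exactly k nonzero entries, then x̃ is a local
minimum of F2_λ for every λ ≥ λ̄ = ‖y‖₂ · maxᵢ ‖aᵢ‖₂, and a local minimum of
F1_λ for every λ ≥ β = maxᵢ ‖aᵢ‖₂. -/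
theorem stmt3 {n d : ℕ} (k : ℕ) (hk : 0 < k) (hkd : k < d)
    (A : Matrix (Fin n) (Fin d) ℝ) (y : Fin n → ℝ)
    (Λ : Finset (Fin d)) (hΛ : Λ.card = k)
    (xt : Fin d → ℝ)
    (hsupp : ∀ i : Fin d, i ∉ Λ → xt i = 0)
    (hminres : ∀ x : Fin d → ℝ, (∀ i : Fin d, i ∉ Λ → x i = 0) →
      l2norm (A.mulVec xt - y) ≤ l2norm (A.mulVec x - y))
    (hcard : Set.ncard {i : Fin d | xt i ≠ 0} = k) :
    (∀ lam : ℝ, l2norm y * (⨆ i : Fin d, l2norm (fun j => A j i)) ≤ lam →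
      IsLocalMin (fun x : Fin d → ℝ =>
        (1 / 2) * (l2norm (A.mulVec x - y)) ^ 2 + lam * tauTL k x) xt) ∧
    (∀ lam : ℝ, (⨆ i : Fin d, l2norm (fun j => A j i)) ≤ lam →
      IsLocalMin (fun x : Fin d → ℝ =>
        l2norm (A.mulVec x - y) + lam * tauTL k x) xt) := by
  let L := (WithLp.linearEquiv 2 ℝ (Fin n → ℝ)).symm.toLinearMap ∘ₗ A.mulVecLin
  have hcol (i : Fin d) : L (Pi.single i 1) = WithLp.toLp 2 (fun j => A j i) :=
    congrArg (WithLp.toLp 2) (A.mulVec_single_one i)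
  simp only [l2norm_eq_norm_toLp, WithLp.toLp_sub, ← hcol] at hminres ⊢
  exact stmt3_general k L (WithLp.toLp 2 y) Λ hΛ xt hsupp hminres hcard
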